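/- Gauss–Green's formula: Let M ≥ 0 and let u, v ∈ D_M. Then ∫_{Σ_N^+} (v Δu − u Δv) dμ = Σ_{p ∈ V_M} (v(p) (du)(p) − u(p) (dv)(p)). -/

import Mathlib

open Filter Topology MeasureTheory Finset Classical

noncomputable section

/-- The one-sided full shift space `Σ_N^+` on `N` symbols; coordinates are indexed
from `0`, so the paper's `x_1 x_2 ⋯` is `x 0, x 1, ⋯` here. It carries the product
of the discrete topology on `Fin N`. -/
abbrev SSp (N : ℕ) : Type := ℕ → Fin N

/-- The level-`m` vertex set `V_m = {p : p_i = p_{i+1} for all i ≥ m+1}` (1-based),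
i.e. the sequences that are constant from (0-based) coordinate `m` on.  It is
realized as a `Finset` via the parametrization by the first `m+1` coordinates;
see `mem_V` for the defining property. -/
noncomputable def V (N m : ℕ) : Finset (SSp N) :=
  (Finset.univ : Finset (Fin (m + 1) → Fin N)).image
    (fun w j => w ⟨min j m, by omega⟩)

lemma const_from (N m : ℕ) (p : SSp N) (h : ∀ i, m ≤ i → p i = p (i + 1)) :
    ∀ j, m ≤ j → p j = p m := by
  intro j hj
  induction j with
  | zero => have : m = 0 := by omega
            simp [this]
  | succ k ih =>
      rcases Nat.lt_or_ge k m with hk | hk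
      · have : m = k + 1 := by omega
        simp [this]
      · rw [← h k hk]
        exact ih hk

/-- Membership in `V N m` is exactly the paper's condition
`p_i = p_{i+1}` for all `i ≥ m+1` (1-based), i.e. `p i = p (i+1)` for all `i ≥ m`. -/
lemma mem_V {N m : ℕ} {p : SSp N} :
    p ∈ V N m ↔ ∀ i, m ≤ i → p i = p (i + 1) := by
  classical
  constructor
  · intro hp i hi
    simp only [V, Finset.mem_image] at hp
    obtain ⟨w, -, rfl⟩ := hp
    have h1 : min i m = m := by omega
    have h2 : min (i + 1) m = m := by omega
    simp [h1, h2]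
  · intro h
    simp only [V, Finset.mem_image]
    refine ⟨fun j => p j, Finset.mem_univ _, ?_⟩
    funext j
    rcases Nat.lt_or_ge j m with hj | hj
    · have : min j m = j := by omega
      simp [this]
    · have : min j m = m := by omega
      simp only [this]
      exact (const_from N m p h j hj).symm

/-- The deleted neighbourhood `U_{p,m} = {q ∈ V_m : q ≠ p, q_i = p_i for 1 ≤ i ≤ m}`
(1-based), i.e. `q` agrees with `p` on the first `m` (0-based: `i < m`) coordinates. -/
noncomputable def U (N m : ℕ) (p : SSp N) : Finset (SSp N) :=
  (V N m).filter (fun q => q ≠ p ∧ ∀ i, i < m → q i = p i)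

/-- `κ_p = min {j : p ∈ V_j}`. -/
noncomputable def kappa (N : ℕ) (p : SSp N) : ℕ := sInf {j | p ∈ V N j}

/-- The difference operator
`H_m u (p) = Σ_{i = κ_p}^{m} Σ_{q ∈ U_{p,i}} (u(q) − u(p))`. -/
noncomputable def H (N m : ℕ) (u : SSp N → ℝ) (p : SSp N) : ℝ :=
  ∑ i ∈ Finset.Icc (kappa N p) m, ∑ q ∈ U N i p, (u q - u p)

/-- The Dirichlet form `E_{H_m}(u, v) = − Σ_{p ∈ V_m} u(p) · H_m v(p)`. -/
noncomputable def EH (N m : ℕ) (u v : SSp N → ℝ) : ℝ :=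
  -∑ p ∈ V N m, u p * H N m v p

/-- The cylinder set `[p_1 ⋯ p_m]`, determined by the first `m` coordinates of `p`. -/
def cyl (N m : ℕ) (p : SSp N) : Set (SSp N) := {x | ∀ i, i < m → x i = p i}

/-- `χ_p^m` : the indicator function of the cylinder set `[p_1 ⋯ p_{m+1}]`. -/
noncomputable def chi (N m : ℕ) (p : SSp N) : SSp N → ℝ :=
  (cyl N (m + 1) p).indicator 1

/-- `u ∈ dom E`: `u` is continuous and the energy
`E(u) = lim_m E_{H_m}(u|_{V_m})` exists (and is finite). -/
def MemDomE (N : ℕ) (u : SSp N → ℝ) : Prop :=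
  Continuous u ∧ ∃ L : ℝ, Tendsto (fun m => EH N m u u) atTop (nhds L)

/-- `v ∈ dom_M E`: `v` has finite energy and vanishes on the boundary `V_M`. -/
def MemDomME (N M : ℕ) (v : SSp N → ℝ) : Prop :=
  MemDomE N v ∧ ∀ p ∈ V N M, v p = 0

/-- `u ∈ 𝒟_M` with `Δ u = f` (strong formulation with boundary `V_M`):
`u` and `f` are continuous and
`lim_{m → ∞} max_{p ∈ V_m ∖ V_M} |N^{m+1} H_m u(p) − f(p)| = 0`. -/
def IsLaplacianOn (N M : ℕ) (u f : SSp N → ℝ) : Prop :=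
  Continuous u ∧ Continuous f ∧
    ∀ ε : ℝ, 0 < ε → ∃ m₀ : ℕ, ∀ m, m₀ ≤ m → ∀ p ∈ V N m, p ∉ V N M →
      |(N : ℝ) ^ (m + 1) * H N m u p - f p| < ε

/-- `u ∈ D_μ` with `Δ u = f` (original definition of the Laplacian):
`u` and `f` are continuous and
`lim_{m → ∞} max_{p ∈ V_m ∖ V_{m−1}} |N^{m+1} H_m u(p) − f(p)| = 0`
(the level is written `m+1` to avoid natural subtraction). -/
def IsLaplacianDmu (N : ℕ) (u f : SSp N → ℝ) : Prop :=
  Continuous u ∧ Continuous f ∧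
    ∀ ε : ℝ, 0 < ε → ∃ m₀ : ℕ, ∀ m, m₀ ≤ m → ∀ p ∈ V N (m + 1), p ∉ V N m →
      |(N : ℝ) ^ (m + 2) * H N (m + 1) u p - f p| < ε

/-- `μ` is the equidistributed Bernoulli measure:
`μ([p_1 ⋯ p_m]) = N^{−m}` for every cylinder set. -/
def IsBernoulli (N : ℕ) (μ : Measure (SSp N)) : Prop :=
  ∀ (m : ℕ) (p : SSp N), μ (cyl N m p) = (N : ENNReal)⁻¹ ^ m

/-- `ρ(x,y) = min {i : x_i ≠ y_i}` (1-based; `0`-based first disagreement plus one). -/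
noncomputable def rho (N : ℕ) (x y : SSp N) : ℕ := sInf {i | x i ≠ y i} + 1

/-- The matrix `(G_m)_{pq}`: `2/N` if `q = p`, `1/N` if `q ∈ U_{p,m}`, `0` otherwise. -/
noncomputable def Gmat (N m : ℕ) (p q : SSp N) : ℝ :=
  if q = p then 2 / N else if q ∈ U N m p then 1 / N else 0

/-- The Green's function
`g(x,y) = Σ_{m=1}^{ρ(x,y)−1} Σ_{r,s ∈ V_m ∖ V_{m−1}} (G_m)_{rs} χ_r^m(x) χ_s^m(y)`
for `ρ(x,y) > 1`, and `g(x,y) = 0` for `ρ(x,y) = 1` (the sum is then empty). -/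
noncomputable def greenFn (N : ℕ) (x y : SSp N) : ℝ :=
  ∑ m ∈ Finset.Icc 1 (rho N x y - 1),
    ∑ r ∈ (V N m).filter (fun r => r ∉ V N (m - 1)),
      ∑ s ∈ (V N m).filter (fun s => s ∉ V N (m - 1)),
        Gmat N m r s * chi N m r x * chi N m s y

/-- The Green's operator `G_μ f (x) = ∫_{Σ_N^+ ∖ {x}} g(x,y) f(y) dμ(y)`. -/
noncomputable def Gop (N : ℕ) (μ : Measure (SSp N)) (f : SSp N → ℝ) (x : SSp N) : ℝ :=
  ∫ y in ({x}ᶜ : Set (SSp N)), greenFn N x y * f y ∂μ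

/-!
`H_m` is a sum over levels of graph Laplacians, hence symmetric for the counting measure on `V_m`.
Splitting `∑ (v · H_m u - u · H_m v) = 0` over `V_M` and `V_m \ V_M` gives a discrete Gauss–Green
formula. Truncation after `m + 1` coordinates sends `μ` to the uniform measure on `V_m`, so by
dominated convergence off the null set `V_M` the interior part tends to `∫ (v Δu - u Δv) dμ`. The
indicator `χ_p` of the cylinder of `p ∈ V_M` lies in `D_M` with `Δχ_p = 0`, and `H_m χ_p` does not
depend on `m ≥ M`: using it as `v` shows that `H_m u(p)` converges, and then the boundary part
converges for every `v`.
-/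

section SymmetricRelation

variable {α R : Type*} [CommRing R]

lemma sum_sum_filter_mul_sub_comm (s : Finset α) {r : α → α → Prop} [DecidableRel r]
    (hr : ∀ p q, r p q → r q p) (u w : α → R) :
    ∑ p ∈ s, ∑ q ∈ s with r q p, w p * (u q - u p) =
      ∑ p ∈ s, ∑ q ∈ s with r q p, u p * (w q - w p) := by
  have hswap : ∑ p ∈ s, ∑ q ∈ s with r q p, w p * u q =
      ∑ p ∈ s, ∑ q ∈ s with r q p, u p * w q := by
    simp only [Finset.sum_filter]
    rw [Finset.sum_comm]
    simp only [fun p q => propext ⟨hr p q, hr q p⟩, mul_comm (w _)]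
  simp only [mul_sub, Finset.sum_sub_distrib, hswap]
  simp only [mul_comm (w _)]

end SymmetricRelation

section Truncation

variable {N : ℕ}

/-- The point of `V_m` with the same first `m + 1` coordinates as `x`. -/
def truncate (m : ℕ) (x : SSp N) : SSp N := fun j => x (min j m)

lemma truncate_mem_V (m : ℕ) (x : SSp N) : truncate m x ∈ V N m :=
  mem_V.2 fun i hi => by simp only [truncate, min_eq_right hi, min_eq_right (Nat.le_succ_of_le hi)]

lemma truncate_eq_self {m : ℕ} {p : SSp N} (hp : p ∈ V N m) : truncate m p = p := by
  funext j
  rcases le_total j m with hj | hj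
  · rw [truncate, min_eq_left hj]
  · rw [truncate, min_eq_right hj, const_from N m p (mem_V.1 hp) j hj]

lemma mem_cyl_succ_iff {m : ℕ} {p x : SSp N} :
    x ∈ cyl N (m + 1) p ↔ truncate m x = truncate m p := by
  refine ⟨fun h => funext fun j => h _ (by omega), fun h i hi => ?_⟩
  simpa only [truncate, min_eq_left (Nat.lt_succ_iff.1 hi)] using congrFun h i

lemma tendsto_truncate (x : SSp N) : Tendsto (fun m => truncate m x) atTop (𝓝 x) := by
  refine tendsto_pi_nhds.2 fun j => tendsto_const_nhds.congr' ?_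
  filter_upwards [eventually_ge_atTop j] with m hm
  rw [truncate, min_eq_left hm]

lemma eventually_truncate_notMem {s : Finset (SSp N)} {x : SSp N} (hx : x ∉ s) :
    ∀ᶠ m in atTop, truncate m x ∉ s :=
  (tendsto_truncate x).eventually (s.finite_toSet.isClosed.isOpen_compl.mem_nhds hx)

lemma continuous_comp_truncate {X : Type*} [TopologicalSpace X] (m : ℕ) (F : SSp N → X) :
    Continuous fun x => F (truncate m x) := by
  have hrestrict : Continuous fun (x : SSp N) (j : Fin (m + 1)) => x j := by fun_prop
  have hfactor : (fun x => F (truncate m x)) =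
      (fun w : Fin (m + 1) → Fin N => F fun j => w ⟨min j m, by omega⟩) ∘ fun x j => x j := rfl
  exact hfactor ▸ continuous_of_discreteTopology.comp hrestrict

end Truncation

section DifferenceOperator

variable {N : ℕ}

lemma V_mono : Monotone (V N) := fun _ _ h _ hp => mem_V.2 fun k hk => mem_V.1 hp k (h.trans hk)

lemma kappa_le_iff {m i : ℕ} {p : SSp N} (hp : p ∈ V N m) : kappa N p ≤ i ↔ p ∈ V N i :=
  ⟨fun h => V_mono h (Nat.sInf_mem (s := {j | p ∈ V N j}) ⟨m, hp⟩), fun h => Nat.sInf_le h⟩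

lemma sum_V_mul_H (m : ℕ) (w u : SSp N → ℝ) :
    ∑ p ∈ V N m, w p * H N m u p =
      ∑ i ∈ Finset.range (m + 1), ∑ p ∈ V N i, ∑ q ∈ U N i p, w p * (u q - u p) := by
  simp only [H, Finset.mul_sum]
  refine Finset.sum_comm' fun p i => ?_
  simp only [Finset.mem_Icc, Finset.mem_range, Nat.lt_succ_iff]
  constructor
  · rintro ⟨hp, hκ, hi⟩
    exact ⟨(kappa_le_iff hp).1 hκ, hi⟩
  · rintro ⟨hp, hi⟩
    exact ⟨V_mono hi hp, (kappa_le_iff hp).2 hp, hi⟩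

lemma sum_V_mul_H_comm (m : ℕ) (w u : SSp N → ℝ) :
    ∑ p ∈ V N m, w p * H N m u p = ∑ p ∈ V N m, u p * H N m w p := by
  rw [sum_V_mul_H, sum_V_mul_H]
  refine Finset.sum_congr rfl fun i _ => ?_
  simp only [U]
  exact sum_sum_filter_mul_sub_comm (r := fun q p => q ≠ p ∧ ∀ k, k < i → q k = p k) (V N i)
    (fun p q h => ⟨h.1.symm, fun k hk => (h.2 k hk).symm⟩) u w

lemma sum_sdiff_mul_H_sub {M m : ℕ} (hm : M ≤ m) (w u : SSp N → ℝ) :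
    ∑ p ∈ V N m \ V N M, w p * H N m u p - ∑ p ∈ V N m \ V N M, u p * H N m w p =
      ∑ p ∈ V N M, (w p * -H N m u p - u p * -H N m w p) := by
  have hsymm := sum_V_mul_H_comm m w u
  rw [← Finset.sum_sdiff (V_mono hm), ← Finset.sum_sdiff (V_mono hm)] at hsymm
  simp only [mul_neg, Finset.sum_sub_distrib, Finset.sum_neg_distrib]
  linarith

end DifferenceOperator

section Bernoulli

variable {N : ℕ} {μ : Measure (SSp N)}

lemma measurableSet_cyl (m : ℕ) (p : SSp N) : MeasurableSet (cyl N m p) :=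
  MeasurableSet.pi (Set.Iio m).to_countable fun i _ => .singleton (p i)

lemma IsBernoulli.nullSingletonClass (hμ : IsBernoulli N μ) (hN : 2 ≤ N) :
    NullSingletonClass μ where
  measure_singleton x := by
    have hlt : (N : ENNReal)⁻¹ < 1 := ENNReal.inv_lt_one.2 (by exact_mod_cast hN)
    refine le_antisymm (ge_of_tendsto' (ENNReal.tendsto_pow_atTop_nhds_zero_of_lt_one hlt)
      fun m => ?_) zero_le
    rw [← hμ m x]
    exact measure_mono (Set.singleton_subset_iff.2 fun _ _ => rfl)

lemma IsBernoulli.integral_comp_truncate {E : Type*} [NormedAddCommGroup E] [NormedSpace ℝ E]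
    [CompleteSpace E] [IsFiniteMeasure μ] (hμ : IsBernoulli N μ) (m : ℕ) (F : SSp N → E) :
    ∫ x, F (truncate m x) ∂μ = ((N : ℝ) ^ (m + 1))⁻¹ • ∑ p ∈ V N m, F p := by
  have hcyl : ∀ x, F (truncate m x) =
      ∑ p ∈ V N m, (cyl N (m + 1) p).indicator (fun _ => F p) x := fun x => by
    rw [Finset.sum_eq_single_of_mem _ (truncate_mem_V m x) fun p hp hne => ?_]
    · rw [Set.indicator_of_mem (mem_cyl_succ_iff.2 (truncate_eq_self (truncate_mem_V m x)).symm)]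
    · refine Set.indicator_of_notMem (fun hx => hne ?_) _
      rw [mem_cyl_succ_iff.1 hx, truncate_eq_self hp]
  simp only [hcyl]
  rw [integral_finsetSum _ fun p _ =>
    (integrable_const (F p)).indicator (measurableSet_cyl (m + 1) p), Finset.smul_sum]
  refine Finset.sum_congr rfl fun p _ => ?_
  simp [integral_indicator_const _ (measurableSet_cyl (m + 1) p), Measure.real, hμ (m + 1) p]

lemma IsBernoulli.sum_sdiff_eq_integral [IsFiniteMeasure μ] (hμ : IsBernoulli N μ) (m : ℕ)
    (s : Finset (SSp N)) (F : SSp N → ℝ) :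
    ∑ p ∈ V N m \ s, F p =
      ∫ x, if truncate m x ∈ s then 0 else (N : ℝ) ^ (m + 1) * F (truncate m x) ∂μ := by
  rw [hμ.integral_comp_truncate m fun p => if p ∈ s then 0 else (N : ℝ) ^ (m + 1) * F p,
    Finset.sdiff_eq_filter, Finset.sum_filter, Finset.smul_sum]
  refine Finset.sum_congr rfl fun p _ => ?_
  split_ifs with hp
  · simp
  · simp [(p 0).pos.ne']

end Bernoulli

namespace IsLaplacianOn

variable {N M : ℕ} {μ : Measure (SSp N)} {u v f g : SSp N → ℝ}

lemma tendsto_pow_mul_H_truncate (hu : IsLaplacianOn N M u f) {x : SSp N} (hx : x ∉ V N M) :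
    Tendsto (fun m => (N : ℝ) ^ (m + 1) * H N m u (truncate m x)) atTop (𝓝 (f x)) := by
  obtain ⟨-, hf, hlim⟩ := hu
  have herr : Tendsto (fun m => (N : ℝ) ^ (m + 1) * H N m u (truncate m x) - f (truncate m x))
      atTop (𝓝 0) := by
    refine NormedAddGroup.tendsto_nhds_zero.2 fun ε hε => ?_
    filter_upwards [eventually_atTop.2 (hlim ε hε), eventually_truncate_notMem hx] with m hm hxm
    exact hm _ (truncate_mem_V m x) hxm
  simpa only [Function.comp_apply, sub_add_cancel, zero_add] using
    herr.add ((hf.tendsto x).comp (tendsto_truncate x))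

lemma exists_eventually_abs_pow_mul_H_le (hu : IsLaplacianOn N M u f) :
    ∃ C, ∀ᶠ m in atTop, ∀ p ∈ V N m, p ∉ V N M → |(N : ℝ) ^ (m + 1) * H N m u p| ≤ C := by
  obtain ⟨-, hf, hlim⟩ := hu
  refine ⟨1 + ‖(⟨f, hf⟩ : C(SSp N, ℝ))‖, ?_⟩
  filter_upwards [eventually_atTop.2 (hlim 1 one_pos)] with m hm p hp hpM
  have hfp : |f p| ≤ ‖(⟨f, hf⟩ : C(SSp N, ℝ))‖ := ContinuousMap.norm_coe_le_norm ⟨f, hf⟩ p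
  linarith [hm p hp hpM, abs_sub_abs_le_abs_sub ((N : ℝ) ^ (m + 1) * H N m u p) (f p)]

lemma tendsto_sum_sdiff_mul_H [IsFiniteMeasure μ] (hu : IsLaplacianOn N M u f) (hN : 2 ≤ N)
    (hμ : IsBernoulli N μ) {w : SSp N → ℝ} (hw : Continuous w) :
    Tendsto (fun m => ∑ p ∈ V N m \ V N M, w p * H N m u p) atTop (𝓝 (∫ x, w x * f x ∂μ)) := by
  have := hμ.nullSingletonClass hN
  obtain ⟨C, hC⟩ := hu.exists_eventually_abs_pow_mul_H_le
  simp only [hμ.sum_sdiff_eq_integral, mul_left_comm _ (w _)]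
  refine tendsto_integral_filter_of_dominated_convergence
    (fun _ => ‖(⟨w, hw⟩ : C(SSp N, ℝ))‖ * max C 0) (.of_forall fun m => ?_) ?_
    (integrable_const _) ?_
  · exact (continuous_comp_truncate m fun p => if p ∈ V N M then 0 else
      w p * ((N : ℝ) ^ (m + 1) * H N m u p)).aestronglyMeasurable
  · filter_upwards [hC] with m hm
    refine .of_forall fun x => ?_
    split_ifs with hx
    · rw [norm_zero]
      positivity
    · rw [norm_mul]
      gcongr
      · exact ContinuousMap.norm_coe_le_norm ⟨w, hw⟩ _
      · exact (hm _ (truncate_mem_V m x) hx).trans (le_max_left C 0)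
  · filter_upwards [(V N M).finite_toSet.countable.ae_notMem μ] with x hx
    refine (((hw.tendsto x).comp (tendsto_truncate x)).mul
      (hu.tendsto_pow_mul_H_truncate hx)).congr' ?_
    filter_upwards [eventually_truncate_notMem hx] with m hm
    rw [if_neg hm, Function.comp_apply]

lemma tendsto_sum_boundary [IsFiniteMeasure μ] (hu : IsLaplacianOn N M u f)
    (hv : IsLaplacianOn N M v g) (hN : 2 ≤ N) (hμ : IsBernoulli N μ) :
    Tendsto (fun m => ∑ p ∈ V N M, (v p * -H N m u p - u p * -H N m v p)) atTop
      (𝓝 (∫ x, (v x * f x - u x * g x) ∂μ)) := by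
  have hvf : Integrable (fun x => v x * f x) μ :=
    (hv.1.mul hu.2.1).integrable_of_hasCompactSupport (.of_compactSpace _)
  have hug : Integrable (fun x => u x * g x) μ :=
    (hu.1.mul hv.2.1).integrable_of_hasCompactSupport (.of_compactSpace _)
  rw [integral_sub hvf hug]
  refine ((hu.tendsto_sum_sdiff_mul_H hN hμ hv.1).sub
    (hv.tendsto_sum_sdiff_mul_H hN hμ hu.1)).congr' ?_
  filter_upwards [eventually_ge_atTop M] with m hm
  exact sum_sdiff_mul_H_sub hm v u

end IsLaplacianOn

section CylinderIndicator

variable {N M : ℕ}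

lemma chi_apply (p x : SSp N) : chi N M p x = if truncate M x = truncate M p then 1 else 0 := by
  simp only [chi, Set.indicator_apply, mem_cyl_succ_iff, Pi.one_apply]

lemma chi_apply_of_mem_V {p q : SSp N} (hp : p ∈ V N M) (hq : q ∈ V N M) :
    chi N M p q = if q = p then 1 else 0 := by
  rw [chi_apply, truncate_eq_self hp, truncate_eq_self hq]

lemma continuous_chi (p : SSp N) : Continuous (chi N M p) := by
  rw [funext (chi_apply p)]
  exact continuous_comp_truncate M fun y => if y = truncate M p then (1 : ℝ) else 0

lemma truncate_eq_of_mem_U {i : ℕ} {p q : SSp N} (hi : M < i) (hq : q ∈ U N i p) :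
    truncate M q = truncate M p :=
  funext fun _ => (Finset.mem_filter.1 hq).2.2 _ ((min_le_right _ _).trans_lt hi)

lemma H_chi_eq {m : ℕ} (hm : M ≤ m) (p q : SSp N) :
    H N m (chi N M p) q = H N M (chi N M p) q := by
  refine (Finset.sum_subset (Finset.Icc_subset_Icc_right hm) fun i hi hi' =>
    Finset.sum_eq_zero fun r hr => ?_).symm
  have hMi : M < i := by
    simp only [Finset.mem_Icc] at hi hi'
    omega
  rw [chi_apply, chi_apply, truncate_eq_of_mem_U hMi hr, sub_self]

lemma H_eq_zero_of_notMem_V {m : ℕ} {q : SSp N} (hq : q ∈ V N m) (hqM : q ∉ V N M)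
    (w : SSp N → ℝ) : H N M w q = 0 := by
  rw [H, Finset.Icc_eq_empty fun h => hqM ((kappa_le_iff hq).1 h), Finset.sum_empty]

lemma isLaplacianOn_chi (p : SSp N) : IsLaplacianOn N M (chi N M p) 0 := by
  refine ⟨continuous_chi p, continuous_zero, fun ε hε => ⟨M, fun m hm q hq hqM => ?_⟩⟩
  simpa [H_chi_eq hm, H_eq_zero_of_notMem_V hq hqM] using hε

end CylinderIndicator

/-- The Neumann derivative `(du)(p) = lim_{m → ∞} (−H_m u(p))`, with an unspecified value if the
limit does not exist. -/
def neumannDeriv {N : ℕ} (u : SSp N → ℝ) (p : SSp N) : ℝ := limUnder atTop fun m => -H N m u p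

lemma IsLaplacianOn.tendsto_neumannDeriv {N M : ℕ} {μ : Measure (SSp N)} [IsFiniteMeasure μ]
    {u f : SSp N → ℝ} (hu : IsLaplacianOn N M u f) (hN : 2 ≤ N) (hμ : IsBernoulli N μ)
    {p : SSp N} (hp : p ∈ V N M) :
    Tendsto (fun m => -H N m u p) atTop (𝓝 (neumannDeriv u p)) := by
  refine tendsto_nhds_limUnder ⟨_, ((hu.tendsto_sum_boundary (isLaplacianOn_chi p) hN hμ).sub_const
    (∑ q ∈ V N M, u q * H N M (chi N M p) q)).congr' ?_⟩
  filter_upwards [eventually_ge_atTop M] with m hm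
  have hpoint : ∑ q ∈ V N M, chi N M p q * H N m u q = H N m u p := by
    rw [Finset.sum_congr rfl fun q hq => by rw [chi_apply_of_mem_V hp hq]]
    simp only [ite_mul, one_mul, zero_mul, Finset.sum_ite_eq', if_pos hp]
  simp only [H_chi_eq hm, mul_neg, Finset.sum_sub_distrib, Finset.sum_neg_distrib, hpoint]
  ring

/-- Gauss–Green: for `u, v ∈ 𝒟_M` with `Δu = f`, `Δv = g`,
`∫ (v Δu − u Δv) dμ = Σ_{p ∈ V_M} (v(p)(du)(p) − u(p)(dv)(p))`. -/
theorem statement14 (N : ℕ) (hN : 2 ≤ N)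
    (μ : Measure (SSp N)) [IsProbabilityMeasure μ] (hμ : IsBernoulli N μ)
    (M : ℕ) (u v f g : SSp N → ℝ)
    (huf : IsLaplacianOn N M u f) (hvg : IsLaplacianOn N M v g) :
    ∃ du dv : SSp N → ℝ,
      (∀ p ∈ V N M, Tendsto (fun m => -(H N m u p)) atTop (nhds (du p))) ∧
      (∀ p ∈ V N M, Tendsto (fun m => -(H N m v p)) atTop (nhds (dv p))) ∧
      ∫ x, (v x * f x - u x * g x) ∂μ =
        ∑ p ∈ V N M, (v p * du p - u p * dv p) := by
  have hdu := fun p (hp : p ∈ V N M) => huf.tendsto_neumannDeriv hN hμ hp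
  have hdv := fun p (hp : p ∈ V N M) => hvg.tendsto_neumannDeriv hN hμ hp
  refine ⟨neumannDeriv u, neumannDeriv v, hdu, hdv, ?_⟩
  exact tendsto_nhds_unique (huf.tendsto_sum_boundary hvg hN hμ) <|
    tendsto_finsetSum (V N M) fun p hp =>
      ((hdu p hp).const_mul (v p)).sub ((hdv p hp).const_mul (u p))
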